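/- Let R be a commutative ring, A, B ∈ GL_n(R), and 1 ≤ k ≤ n. Then every k × k minor of AB is a sum of 2k × 2k minors of the block-diagonal matrix diag(A, B) ∈ GL_{2n}(R). -/

import Mathlib

/-!
By multilinearity in the rows and the vanishing of determinants with a repeated row, a minor of
`A * B` expands over the injections into the inner index set. Every injection of `Fin k` into a
linear order is, in a unique way, an increasing one precomposed with a permutation; summing over
the permutations gives the Cauchy–Binet formula. Each of its terms is a product of a minor of `A`
and a minor of `B`, and such a product is a single minor of `diag(A, B)`.
-/

section

open Matrix Equiv Function

variable {R α β α' β' ι κ μ ν τ : Type*} [CommRing R]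

section CauchyBinet

variable [Fintype κ] [DecidableEq κ]

theorem det_submatrix_eq_zero_of_not_injective (M : Matrix α β R) {f : κ → α} (c : κ → β)
    (hf : ¬ Injective f) : (M.submatrix f c).det = 0 := by
  obtain ⟨i, j, hij, hne⟩ := not_injective_iff.mp hf
  exact det_zero_of_row_eq hne (funext fun l => congrArg (M · (c l)) hij)

theorem det_submatrix_mul_eq_sum_fun [Fintype ι] (A : Matrix α ι R) (B : Matrix ι β R)
    (r : κ → α) (c : κ → β) :
    ((A * B).submatrix r c).det =
      ∑ f : κ → ι, (∏ i, A (r i) (f i)) * (B.submatrix f c).det := by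
  have hrows : (A * B).submatrix r c = fun i => ∑ j, A (r i) j • fun l => B j (c l) := by
    ext i l
    simp [mul_apply]
  calc ((A * B).submatrix r c).det
    _ = ∑ f : κ → ι, detRowAlternating fun i => A (r i) (f i) • fun l => B (f i) (c l) := by
      rw [hrows]
      exact detRowAlternating.toMultilinearMap.map_sum _
    _ = ∑ f : κ → ι, (∏ i, A (r i) (f i)) * (B.submatrix f c).det :=
      Finset.sum_congr rfl fun f _ =>
        detRowAlternating.map_smul_univ (fun i => A (r i) (f i)) fun i l => B (f i) (c l)

theorem det_submatrix_mul_eq_sum_embedding [Fintype ι] [Fintype (κ ↪ ι)] (A : Matrix α ι R)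
    (B : Matrix ι β R) (r : κ → α) (c : κ → β) :
    ((A * B).submatrix r c).det =
      ∑ f : κ ↪ ι, (∏ i, A (r i) (f i)) * (B.submatrix f c).det := by
  rw [det_submatrix_mul_eq_sum_fun]
  refine (Fintype.sum_of_injective _ DFunLike.coe_injective _ _ (fun f hf => ?_)
    fun _ => rfl).symm
  have hninj : ¬ Injective f := fun hinj => hf ⟨⟨f, hinj⟩, rfl⟩
  rw [det_submatrix_eq_zero_of_not_injective B c hninj, mul_zero]

theorem sum_perm_prod_mul_det_submatrix (M N : Matrix κ κ R) :
    ∑ σ : Perm κ, (∏ i, M i (σ i)) * (N.submatrix σ id).det = M.det * N.det := by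
  rw [← det_transpose M, det_apply', Finset.sum_mul]
  refine Finset.sum_congr rfl fun σ _ => ?_
  rw [det_permute]
  simp only [transpose_apply]
  ring

theorem bijective_perm_trans_orderEmbedding [LinearOrder ι] {k : ℕ} :
    Bijective fun p : (Fin k ↪o ι) × Perm (Fin k) => p.2.toEmbedding.trans p.1.toEmbedding := by
  constructor
  · rintro ⟨e, σ⟩ ⟨e', τ⟩ h
    have hcomp : e ∘ σ = e' ∘ τ := congrArg DFunLike.coe h
    have hrange : Set.range e = Set.range e' := by
      rw [← σ.surjective.range_comp e, hcomp, τ.surjective.range_comp]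
    obtain rfl : e = e' := OrderEmbedding.range_inj.mp hrange
    obtain rfl : σ = τ := Equiv.ext fun i => e.injective (congrFun hcomp i)
    rfl
  · intro f
    have hmono : StrictMono (f ∘ Tuple.sort f) :=
      (Tuple.monotone_sort f).strictMono_of_injective (f.injective.comp (Tuple.sort f).injective)
    exact ⟨(OrderEmbedding.ofStrictMono _ hmono, (Tuple.sort f)⁻¹), by ext i; simp⟩

theorem det_submatrix_mul_eq_sum_orderEmbedding [Fintype ι] [LinearOrder ι] {k : ℕ}
    [Fintype (Fin k ↪o ι)] (A : Matrix α ι R) (B : Matrix ι β R) (r : Fin k → α) (c : Fin k → β) :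
    ((A * B).submatrix r c).det =
      ∑ e : Fin k ↪o ι, (A.submatrix r e).det * (B.submatrix e c).det := by
  calc ((A * B).submatrix r c).det
    _ = ∑ f : Fin k ↪ ι, (∏ i, A (r i) (f i)) * (B.submatrix f c).det :=
      det_submatrix_mul_eq_sum_embedding A B r c
    _ = ∑ e : Fin k ↪o ι, ∑ σ : Perm (Fin k),
          (∏ i, A (r i) (e (σ i))) * (B.submatrix (e ∘ σ) c).det := by
      rw [← bijective_perm_trans_orderEmbedding.sum_comp, Fintype.sum_prod_type]
      rfl
    _ = ∑ e : Fin k ↪o ι, (A.submatrix r e).det * (B.submatrix e c).det :=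
      Finset.sum_congr rfl fun e _ =>
        sum_perm_prod_mul_det_submatrix (A.submatrix r e) (B.submatrix e c)

end CauchyBinet

theorem fromBlocks_submatrix_sumMap {S : Type*} (A : Matrix α β S) (B : Matrix α β' S)
    (C : Matrix α' β S) (D : Matrix α' β' S) (r : κ → α) (s : ν → β) (t : μ → α') (c : τ → β') :
    (fromBlocks A B C D).submatrix (Sum.map r t) (Sum.map s c) =
      fromBlocks (A.submatrix r s) (B.submatrix r c) (C.submatrix t s) (D.submatrix t c) := by
  ext (i | i) (j | j) <;> rfl

theorem det_fromBlocks_zero_submatrix_sumMap_comp [Fintype κ] [DecidableEq κ] [Fintype μ]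
    [DecidableEq μ] [Fintype ν] [DecidableEq ν] (A : Matrix α β R) (B : Matrix α' β' R)
    (r : κ → α) (s : κ → β) (t : μ → α') (c : μ → β') (φ : ν ≃ κ ⊕ μ) :
    ((fromBlocks A 0 0 B).submatrix (Sum.map r t ∘ φ) (Sum.map s c ∘ φ)).det =
      (A.submatrix r s).det * (B.submatrix t c).det := by
  rw [← submatrix_submatrix, det_submatrix_equiv_self, fromBlocks_submatrix_sumMap]
  exact det_fromBlocks_zero₁₂ _ _ _

/- The index maps of a minor may repeat a row or a column; the two injectivity clauses ensure that
a minor of `A * B` without repetitions is a sum of minors without repetitions. -/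
theorem stmt1_general [Fintype ι] {k : ℕ} (A : Matrix α ι R) (B : Matrix ι β R)
    (r : Fin k → α) (c : Fin k → β) :
    ∃ (m : ℕ) (ρ : Fin m → Fin (2 * k) → α ⊕ ι) (γ : Fin m → Fin (2 * k) → ι ⊕ β),
      (Injective r → ∀ i, Injective (ρ i)) ∧ (Injective c → ∀ i, Injective (γ i)) ∧
      ((A * B).submatrix r c).det =
        ∑ i : Fin m, ((fromBlocks A 0 0 B).submatrix (ρ i) (γ i)).det := by
  classical
  let _ : LinearOrder ι := linearOrderOfSTO WellOrderingRel
  let _ := Fintype.ofFinite (Fin k ↪o ι)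
  let φ : Fin (2 * k) ≃ Fin k ⊕ Fin k := (finCongr (two_mul k)).trans finSumFinEquiv.symm
  let ε := (Fintype.equivFin (Fin k ↪o ι)).symm
  refine ⟨_, fun i => Sum.map r (ε i) ∘ φ, fun i => Sum.map (ε i) c ∘ φ,
    fun hr i => (hr.sumMap (ε i).injective).comp φ.injective,
    fun hc i => ((ε i).injective.sumMap hc).comp φ.injective, ?_⟩
  simp only [det_fromBlocks_zero_submatrix_sumMap_comp]
  rw [det_submatrix_mul_eq_sum_orderEmbedding]
  exact (ε.sum_comp fun e => (A.submatrix r e).det * (B.submatrix e c).det).symm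

end

/-- Every `k × k` minor of `A * B` (for `A, B ∈ GL_n(R)`) is a sum of `2k × 2k` minors of
the block-diagonal matrix `diag(A, B) ∈ GL_{2n}(R)`. -/
theorem stmt1 {R : Type*} [CommRing R] {n k : ℕ} (hn : 1 ≤ n) (hk : 1 ≤ k) (hkn : k ≤ n)
    (A B : Matrix (Fin n) (Fin n) R) (hA : IsUnit A.det) (hB : IsUnit B.det)
    (r c : Fin k → Fin n) :
    ∃ (m : ℕ) (ρ γ : Fin m → (Fin (2 * k) → (Fin n ⊕ Fin n))),
      ((A * B).submatrix r c).det =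
        ∑ i : Fin m, ((Matrix.fromBlocks A 0 0 B).submatrix (ρ i) (γ i)).det := by
  obtain ⟨m, ρ, γ, -, -, hsum⟩ := stmt1_general A B r c
  exact ⟨m, ρ, γ, hsum⟩
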